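/- arXiv:2009.09751 — 3 statements merged into one kernel-verified Lean document; each statement's English description precedes it below -/
import Mathlib

section
/- Let p ∈ [1/2, 1). There exists a constant C > 0 such that for all n ≥ 1 and all integers k with ⌊np⌋ ≤ k ≤ n, one has f_{n,k} ≤ C · (2/√n) · φ(z_{n,k+1}). -/
open MeasureTheory Filter

/-- The standard normal density. -/
noncomputable def normalPdf (x : ℝ) : ℝ := Real.exp (-x ^ 2 / 2) / Real.sqrt (2 * Real.pi)

/-- Binomial probabilities `f_{n,k} = (n choose k) p^k (1-p)^(n-k)`. -/
noncomputable def binProb (p : ℝ) (n k : ℕ) : ℝ := (n.choose k : ℝ) * p ^ k * (1 - p) ^ (n - k)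

/-- Standardized points `z_{n,k} = (k - np)/√(np(1-p))` (also used for `k = n+1`, `k = -1`). -/
noncomputable def zpt (p : ℝ) (n : ℕ) (k : ℤ) : ℝ :=
  ((k : ℝ) - n * p) / Real.sqrt (n * p * (1 - p))

/-!
For `p ≥ 1/2` and `k > np - 1`, consecutive binomial probabilities have ratio at most
`exp (-(k - np) / (np(1-p)))`. Indeed, for `b = k - np ≥ 0` the ratio is at most `(1 - u) / (1 + v)`
with `u = b / (n(1-p)) ≥ v = b / (np)`, and `(1 - u) / (1 + v) ≤ exp (-(u + v))`. Telescoping shows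
that `f_{n,k} exp ((k - 1/2 - np)² / (2np(1-p)))` is antitone for `k ≥ ⌊np⌋`, and replacing
`k - 1/2` by `k + 1` costs a bounded factor because `k - np ≤ n(1-p)`. Finally
`f_{n,⌊np⌋} = O(1/√n)`: the probabilities decay so slowly to the right of `np` that about `√n` of
them are at least half of `f_{n,⌊np⌋}`, while they sum to `1`.
-/

variable {p : ℝ} {n k : ℕ}

lemma binProb_nonneg (hp₀ : 0 ≤ p) (hp₁ : p ≤ 1) (n k : ℕ) : 0 ≤ binProb p n k := by
  have : 0 ≤ 1 - p := sub_nonneg.mpr hp₁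
  unfold binProb
  positivity

lemma binProb_eq_zero_of_lt (p : ℝ) (hnk : n < k) : binProb p n k = 0 := by
  simp [binProb, Nat.choose_eq_zero_of_lt hnk]

lemma hasSum_binProb (p : ℝ) (n : ℕ) : HasSum (binProb p n) 1 := by
  have hsum : ∑ k ∈ Finset.range (n + 1), binProb p n k = 1 := by
    calc ∑ k ∈ Finset.range (n + 1), binProb p n k = (p + (1 - p)) ^ n := by
          rw [add_pow]
          exact Finset.sum_congr rfl fun k _ ↦ by unfold binProb; ring
      _ = 1 := by simp
  rw [← hsum]
  refine hasSum_sum_of_ne_finset_zero fun k hk ↦ binProb_eq_zero_of_lt p ?_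
  simpa [Nat.lt_succ_iff] using hk

lemma binProb_succ_mul (p : ℝ) (n k : ℕ) :
    binProb p n (k + 1) * ((k + 1) * (1 - p)) = binProb p n k * ((n - k) * p) := by
  rcases lt_trichotomy k n with hkn | rfl | hnk
  · have hchoose : (n.choose (k + 1) : ℝ) * (k + 1) = n.choose k * (n - k) := by
      rw [← Nat.cast_sub hkn.le]
      exact_mod_cast Nat.choose_succ_right_eq n k
    have hpow : n - k = n - (k + 1) + 1 := by lia
    unfold binProb
    rw [hpow]
    linear_combination p ^ (k + 1) * (1 - p) ^ (n - (k + 1) + 1) * hchoose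
  · simp [binProb_eq_zero_of_lt p k.lt_succ_self]
  · simp [binProb_eq_zero_of_lt p hnk, binProb_eq_zero_of_lt p (hnk.trans k.lt_succ_self)]

lemma one_sub_mul_binProb_le_binProb_succ (hp₀ : 0 < p) (hp₁ : p < 1) (hn : 0 < n)
    (hk : n * p ≤ k + 1) :
    (1 - (k + 1 - n * p) / (n * p * (1 - p))) * binProb p n k ≤ binProb p n (k + 1) := by
  have hq : 0 < 1 - p := sub_pos.mpr hp₁
  set s := n * p * (1 - p)
  set x := k + 1 - n * p
  have hs₀ : 0 < s := by positivity
  have : 0 ≤ x := sub_nonneg.mpr hk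
  have hsD : s ≤ (k + 1) * (1 - p) := mul_le_mul_of_nonneg_right hk hq.le
  refine le_of_mul_le_mul_right ?_ (show 0 < (k + 1) * (1 - p) by positivity)
  calc (1 - x / s) * binProb p n k * ((k + 1) * (1 - p))
      = binProb p n k * ((k + 1) * (1 - p) - x / s * ((k + 1) * (1 - p))) := by ring
    _ ≤ binProb p n k * ((n - k) * p) := by
        refine mul_le_mul_of_nonneg_left ?_ (binProb_nonneg hp₀.le hp₁.le n k)
        have hxD : x ≤ x / s * ((k + 1) * (1 - p)) := by
          calc x = x / s * s := by field_simp
            _ ≤ x / s * ((k + 1) * (1 - p)) := by gcongr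
        linarith
    _ = binProb p n (k + 1) * ((k + 1) * (1 - p)) := (binProb_succ_mul p n k).symm

lemma half_binProb_le_binProb_add (hp₀ : 0 < p) (hp₁ : p < 1) (hn : 0 < n)
    (hk : k ≤ n * p) (hk' : n * p < k + 1) {m i : ℕ} (hm : 2 * (m : ℝ) ^ 2 ≤ n * p * (1 - p))
    (hi : i ≤ m) : binProb p n k / 2 ≤ binProb p n (k + i) := by
  have : 0 < 1 - p := sub_pos.mpr hp₁
  have hf := binProb_nonneg hp₀.le hp₁.le n
  set s := n * p * (1 - p)
  have hs₀ : 0 < s := by positivity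
  have hms : (m : ℝ) / s ≤ 1 := by
    have hm_sq : (m : ℝ) ≤ m ^ 2 := by exact_mod_cast Nat.le_self_pow two_ne_zero m
    rw [div_le_one hs₀]
    linarith [sq_nonneg (m : ℝ)]
  have hstep : ∀ j < i, (1 - m / s) * binProb p n (k + j) ≤ binProb p n (k + (j + 1)) := by
    intro j hj
    have hjm : (j : ℝ) + 1 ≤ m := by exact_mod_cast hj.trans_le hi
    have hnp : n * p ≤ (k + j : ℕ) + 1 := by push_cast; linarith [j.cast_nonneg (α := ℝ)]
    refine le_trans ?_ (one_sub_mul_binProb_le_binProb_succ hp₀ hp₁ hn hnp)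
    have hdist : (k + j : ℕ) + 1 - n * p ≤ m := by push_cast; linarith
    refine mul_le_mul_of_nonneg_right ?_ (hf _)
    gcongr
    exact hdist
  have hbernoulli : (1 : ℝ) / 2 ≤ (1 - m / s) ^ i := by
    have him : i * (m / s) ≤ 1 / 2 := by
      calc i * (m / s) ≤ m * (m / s) := by gcongr
        _ = m ^ 2 / s := by ring
        _ ≤ 1 / 2 := by rw [div_le_iff₀ hs₀]; linarith
    have := one_add_mul_le_pow (a := -((m : ℝ) / s)) (by linarith) i
    rw [← sub_eq_add_neg] at this
    linarith
  calc binProb p n k / 2 = 1 / 2 * binProb p n (k + 0) := by rw [add_zero]; ring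
    _ ≤ (1 - m / s) ^ i * binProb p n (k + 0) := mul_le_mul_of_nonneg_right hbernoulli (hf _)
    _ ≤ binProb p n (k + i) := geom_le (u := fun j ↦ binProb p n (k + j)) (by linarith) i hstep

lemma binProb_floor_le (hp₀ : 0 < p) (hp₁ : p < 1) (hn : 0 < n) :
    binProb p n ⌊n * p⌋₊ ≤ 4 / √(n * p * (1 - p)) := by
  have : 0 < 1 - p := sub_pos.mpr hp₁
  have hf := binProb_nonneg hp₀.le hp₁.le n
  set k := ⌊n * p⌋₊
  set s := n * p * (1 - p)
  have hs₀ : 0 < s := by positivity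
  set m := ⌊√s / 2⌋₊
  have hm : 2 * (m : ℝ) ^ 2 ≤ s := by
    have hm_le : (m : ℝ) ≤ √s / 2 := Nat.floor_le (by positivity)
    calc 2 * (m : ℝ) ^ 2 ≤ 2 * (√s / 2) ^ 2 := by gcongr
      _ = s / 2 := by rw [div_pow, Real.sq_sqrt hs₀.le]; ring
      _ ≤ s := half_le_self hs₀.le
  have hmass : (m + 1) * (binProb p n k / 2) ≤ 1 := by
    calc (m + 1) * (binProb p n k / 2)
        = ∑ _i ∈ Finset.range (m + 1), binProb p n k / 2 := by simp
      _ ≤ ∑ i ∈ Finset.range (m + 1), binProb p n (k + i) :=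
          Finset.sum_le_sum fun i hi ↦ half_binProb_le_binProb_add hp₀ hp₁ hn
            (Nat.floor_le (by positivity)) (Nat.lt_floor_add_one _) hm
            (Finset.mem_range_succ_iff.mp hi)
      _ = ∑ j ∈ (Finset.range (m + 1)).map (addLeftEmbedding k), binProb p n j := by simp
      _ ≤ 1 := sum_le_hasSum _ (fun j _ ↦ hf j) (hasSum_binProb p n)
  rw [le_div_iff₀ (Real.sqrt_pos.mpr hs₀)]
  nlinarith [hf k, Nat.lt_floor_add_one (√s / 2)]

lemma one_sub_le_one_add_mul_exp_neg_add {u v : ℝ} (hv : 0 ≤ v) (hvu : v ≤ u) :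
    1 - u ≤ (1 + v) * Real.exp (-(u + v)) := by
  rcases le_or_gt 1 v with hv₁ | hv₁
  · have : 0 ≤ (1 + v) * Real.exp (-(u + v)) := by positivity
    linarith
  have hv_sub : 0 < 1 - v := sub_pos.mpr hv₁
  -- `(1 - u) * exp u` decreases for `u ≥ 0`, so the worst case is `u = v`.
  have hdiag : 1 - v ≤ (1 + v) * Real.exp (-(2 * v)) := by
    have hlog : v ≤ 1 / 2 * Real.log ((1 + v) / (1 - v)) := by
      simpa using Real.sum_range_le_log_div hv hv₁ 1
    have hexp : Real.exp (2 * v) ≤ (1 + v) / (1 - v) := by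
      rw [← Real.le_log_iff_exp_le (by positivity)]
      linarith
    rw [Real.exp_neg, ← div_eq_mul_inv, le_div_iff₀ (Real.exp_pos _), mul_comm]
    exact (le_div_iff₀ hv_sub).mp hexp
  calc 1 - u ≤ (1 - v) * (1 - (u - v)) := by nlinarith
    _ ≤ (1 - v) * Real.exp (-(u - v)) := by gcongr; exact Real.one_sub_le_exp_neg _
    _ ≤ (1 + v) * Real.exp (-(2 * v)) * Real.exp (-(u - v)) := by gcongr
    _ = (1 + v) * Real.exp (-(u + v)) := by rw [mul_assoc, ← Real.exp_add]; ring_nf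

lemma sub_mul_le_add_one_mul_exp {x y : ℝ} (hp : 1 / 2 ≤ p) (hp₁ : p < 1) (hx : 0 < x)
    (hy : x * p < y + 1) :
    (x - y) * p ≤ (y + 1) * (1 - p) * Real.exp (-((y - x * p) / (x * p * (1 - p)))) := by
  have hp₀ : 0 < p := by linarith
  have hq : 0 < 1 - p := sub_pos.mpr hp₁
  set s := x * p * (1 - p) with hs
  set u := (y - x * p) / (x * (1 - p)) with hu
  set v := (y - x * p) / (x * p) with hv
  have huv : (y - x * p) / s = u + v := by rw [hu, hv, hs]; field_simp; ring
  have hleft : (x - y) * p = s * (1 - u) := by rw [hu, hs]; field_simp; ring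
  rw [hleft, huv]
  rcases le_or_gt 0 (y - x * p) with hb | hb
  · have hright : s * (1 + v) ≤ (y + 1) * (1 - p) := by
      have : s * (1 + v) = y * (1 - p) := by rw [hv, hs]; field_simp; ring
      linarith
    have hvu : v ≤ u := by rw [hu, hv]; gcongr; linarith
    calc s * (1 - u) ≤ s * ((1 + v) * Real.exp (-(u + v))) := by
          gcongr
          exact one_sub_le_one_add_mul_exp_neg_add (div_nonneg hb (by positivity)) hvu
      _ = s * (1 + v) * Real.exp (-(u + v)) := (mul_assoc _ _ _).symm
      _ ≤ (y + 1) * (1 - p) * Real.exp (-(u + v)) := by gcongr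
  · have hv₀ : v ≤ 0 := div_nonpos_of_nonpos_of_nonneg hb.le (by positivity)
    calc s * (1 - u) ≤ s * Real.exp (-u) := by gcongr; exact Real.one_sub_le_exp_neg u
      _ ≤ (y + 1) * (1 - p) * Real.exp (-(u + v)) := by
        have hy₀ : 0 ≤ y + 1 := by linarith [mul_pos hx hp₀]
        rw [hs]
        gcongr
        linarith

lemma binProb_succ_le_mul_exp (hp : 1 / 2 ≤ p) (hp₁ : p < 1) (hn : 0 < n) (hk : n * p < k + 1) :
    binProb p n (k + 1) ≤
      binProb p n k * Real.exp (-((k - n * p) / (n * p * (1 - p)))) := by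
  have hp₀ : 0 < p := by linarith
  have : 0 < 1 - p := sub_pos.mpr hp₁
  refine le_of_mul_le_mul_right ?_ (show 0 < (k + 1) * (1 - p) by positivity)
  rw [binProb_succ_mul, mul_assoc, mul_comm (Real.exp _)]
  exact mul_le_mul_of_nonneg_left
    (sub_mul_le_add_one_mul_exp hp hp₁ (by positivity) hk) (binProb_nonneg hp₀.le hp₁.le n k)

lemma antitoneOn_binProb_mul_exp_sq (hp : 1 / 2 ≤ p) (hp₁ : p < 1) (hn : 0 < n) :
    AntitoneOn
      (fun k : ℕ ↦ binProb p n k * Real.exp ((k - 1 / 2 - n * p) ^ 2 / (2 * (n * p * (1 - p)))))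
      (Set.Ici ⌊n * p⌋₊) := by
  refine antitoneOn_of_succ_le Set.ordConnected_Ici fun k _ hk _ ↦ ?_
  have hnp : n * p < k + 1 := (Nat.lt_floor_add_one _).trans_le (by gcongr; exact hk)
  calc binProb p n (k + 1) *
        Real.exp (((k + 1 : ℕ) - 1 / 2 - n * p) ^ 2 / (2 * (n * p * (1 - p))))
      ≤ binProb p n k * Real.exp (-((k - n * p) / (n * p * (1 - p)))) *
        Real.exp (((k + 1 : ℕ) - 1 / 2 - n * p) ^ 2 / (2 * (n * p * (1 - p)))) := by
        gcongr
        exact binProb_succ_le_mul_exp hp hp₁ hn hnp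
    _ = binProb p n k * Real.exp ((k - 1 / 2 - n * p) ^ 2 / (2 * (n * p * (1 - p)))) := by
        generalize n * p * (1 - p) = s
        rw [mul_assoc, ← Real.exp_add, Nat.cast_succ]
        ring_nf

lemma binProb_le_binProb_floor_mul_exp (hp : 1 / 2 ≤ p) (hp₁ : p < 1) (hn : 0 < n)
    (hk : ⌊n * p⌋₊ ≤ k) (hkn : k ≤ n) :
    binProb p n k ≤ binProb p n ⌊n * p⌋₊ *
      Real.exp (3 / (p * (1 - p)) - (k + 1 - n * p) ^ 2 / (2 * (n * p * (1 - p)))) := by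
  have hp₀ : 0 < p := by linarith
  have hq : 0 < 1 - p := sub_pos.mpr hp₁
  have hn₁ : (1 : ℝ) ≤ n := by exact_mod_cast hn
  have hkn' : (k : ℝ) ≤ n := by exact_mod_cast hkn
  have hfloor_le : (⌊n * p⌋₊ : ℝ) ≤ n * p := Nat.floor_le (by positivity)
  have hlt_floor : n * p < ⌊n * p⌋₊ + 1 := Nat.lt_floor_add_one _
  set k₀ := ⌊n * p⌋₊
  set s := n * p * (1 - p) with hs
  have hmono : binProb p n k * Real.exp ((k - 1 / 2 - n * p) ^ 2 / (2 * s)) ≤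
      binProb p n k₀ * Real.exp ((k₀ - 1 / 2 - n * p) ^ 2 / (2 * s)) :=
    antitoneOn_binProb_mul_exp_sq hp hp₁ hn Set.self_mem_Ici hk hk
  have hexponent : (k₀ - 1 / 2 - n * p) ^ 2 / (2 * s) ≤
      3 / (p * (1 - p)) - (k + 1 - n * p) ^ 2 / (2 * s) + (k - 1 / 2 - n * p) ^ 2 / (2 * s) := by
    have hscale : 3 / (p * (1 - p)) = 6 * n / (2 * s) := by rw [hs]; field_simp; norm_num
    have hstart : (k₀ - 1 / 2 - n * p) ^ 2 ≤ 9 / 4 := by nlinarith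
    rw [hscale, ← sub_div, ← add_div]
    gcongr
    nlinarith
  refine le_of_mul_le_mul_right (hmono.trans ?_) (Real.exp_pos _)
  rw [mul_assoc, ← Real.exp_add]
  gcongr
  exact binProb_nonneg hp₀.le hp₁.le n k₀

lemma normalPdf_zpt (hp₀ : 0 ≤ p) (hp₁ : p ≤ 1) (n : ℕ) (k : ℤ) :
    normalPdf (zpt p n k) =
      Real.exp (-((k - n * p) ^ 2 / (2 * (n * p * (1 - p))))) / √(2 * Real.pi) := by
  have hs : 0 ≤ n * p * (1 - p) := mul_nonneg (by positivity) (sub_nonneg.mpr hp₁)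
  unfold normalPdf zpt
  rw [div_pow, Real.sq_sqrt hs]
  generalize n * p * (1 - p) = s
  ring_nf

theorem binomial_right_tail_pointwise_gaussian_bound
    (p : ℝ) (hp : p ∈ Set.Ico (1 / 2 : ℝ) 1) :
    ∃ C > (0 : ℝ), ∀ n : ℕ, 1 ≤ n → ∀ k : ℕ,
      ⌊(n : ℝ) * p⌋ ≤ (k : ℤ) → k ≤ n →
      binProb p n k ≤ C * (2 / Real.sqrt n) * normalPdf (zpt p n (k + 1)) := by
  obtain ⟨hp, hp₁⟩ := hp
  have hp₀ : 0 < p := by linarith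
  have : 0 < 1 - p := sub_pos.mpr hp₁
  refine ⟨2 * Real.exp (3 / (p * (1 - p))) * √(2 * Real.pi) / √(p * (1 - p)), by positivity, ?_⟩
  intro n hn k hk hkn
  have hfloor : ⌊n * p⌋₊ ≤ k := by
    rw [← Int.natCast_floor_eq_floor (by positivity)] at hk
    exact_mod_cast hk
  calc binProb p n k
      ≤ binProb p n ⌊n * p⌋₊ * Real.exp
          (3 / (p * (1 - p)) - (k + 1 - n * p) ^ 2 / (2 * (n * p * (1 - p)))) :=
        binProb_le_binProb_floor_mul_exp hp hp₁ hn hfloor hkn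
    _ ≤ 4 / √(n * p * (1 - p)) * Real.exp
          (3 / (p * (1 - p)) - (k + 1 - n * p) ^ 2 / (2 * (n * p * (1 - p)))) := by
        gcongr
        exact binProb_floor_le hp₀ hp₁ hn
    _ = _ := by
        rw [normalPdf_zpt hp₀.le hp₁.le, sub_eq_add_neg (3 / _), Real.exp_add, mul_assoc (n : ℝ),
          Real.sqrt_mul n.cast_nonneg]
        push_cast
        field_simp
        norm_num
end

section
/- Let p = 1/2, so that f_{n,k} = (n choose k)·2^{−n} and z_{n,k} = (2k − n)/√n. For every n ≥ 1 and every integer k with n/2 < k ≤ n − 1, one has log( √n · f_{n,k} / (2·φ(z_{n,k+1})) ) ≤ α(k/n)·n + β_n(k/n), where α(w) = −w·log w − (1−w)·log(1−w) − 2w(1−w) + 1/2 − log 2 and β_n(w) = −(1/2)·log w − (1/2)·log(1−w) + 4w − 2 + 25/(12n). -/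
open MeasureTheory Filter

/-- The exponential-rate function in the symmetric binomial-vs-Gaussian comparison. -/
noncomputable def αSym (w : ℝ) : ℝ :=
  -w * Real.log w - (1 - w) * Real.log (1 - w) - 2 * w * (1 - w) + 1 / 2 - Real.log 2

/-- The lower-order correction term in the symmetric binomial-vs-Gaussian comparison. -/
noncomputable def βSym (n : ℕ) (w : ℝ) : ℝ :=
  -(1 / 2) * Real.log w - (1 / 2) * Real.log (1 - w) + 4 * w - 2 + 25 / (12 * n)

/-!
Write `w = k / n`. Stirling's formula with explicit constants bounds `log (n.choose k)` by
`n * binEntropy w - log (n * w * (1 - w)) / 2 + (1 - log (2 * π))`, so `log (binProb p n k)` is at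
most `-n` times the relative entropy of Bernoulli(`w`) with respect to Bernoulli(`p`), up to a
logarithmic correction. Dividing by the Gaussian density adds `z ^ 2 / 2`, and expanding this square
at `z = zpt p n (k + j)` in powers of the shift `j` produces a quadratic rate
`n * (w - p) ^ 2 / (2 * p * (1 - p))`, a linear correction and a term of order `1 / n`. At
`p = 1 / 2` and `j = 1` the constant left over is `log (e / (2 * √(2 * π)))`, which is negative.
-/

section

open Real
open scoped Nat

lemma log_factorial_le_stirling {n : ℕ} (hn : n ≠ 0) :
    log n ! ≤ n * log n - n + log n / 2 + 1 := by
  obtain ⟨m, rfl⟩ := Nat.exists_eq_succ_of_ne_zero hn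
  have h_first : log (Stirling.stirlingSeq 1) = 1 - log 2 / 2 := by
    rw [Stirling.stirlingSeq_one, log_div (exp_ne_zero 1) (by positivity), log_exp,
      log_sqrt zero_le_two]
  have h_le : log (Stirling.stirlingSeq m.succ) ≤ log (Stirling.stirlingSeq 1) :=
    Stirling.log_stirlingSeq'_antitone m.zero_le
  have h_formula := Stirling.log_stirlingSeq_formula m.succ
  rw [log_mul two_ne_zero (by positivity), log_div (by positivity) (exp_ne_zero 1),
    log_exp] at h_formula
  linarith

lemma mul_binEntropy_div {n : ℝ} (hn : n ≠ 0) (x : ℝ) :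
    n * binEntropy (x / n) = n * log n - x * log x - (n - x) * log (n - x) := by
  have h_scale (y : ℝ) : n * negMulLog (y / n) = y * log n - y * log y := by
    rw [div_eq_mul_inv, negMulLog_mul, negMulLog, negMulLog, log_inv]
    field_simp
    ring
  rw [binEntropy_eq_negMulLog_add_negMulLog_one_sub, mul_add, one_sub_div hn, h_scale, h_scale]
  ring

lemma log_choose_le_mul_binEntropy {n k : ℕ} (hk : k ≠ 0) (hkn : k < n) :
    log (n.choose k) ≤ n * binEntropy (k / n)
      - log (n * (k / n) * (1 - k / n)) / 2 + (1 - log (2 * π)) := by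
  have hn : n ≠ 0 := by lia
  have hnk : n - k ≠ 0 := by lia
  have h_sub : ((n - k : ℕ) : ℝ) = n - k := Nat.cast_sub hkn.le
  have h_sub_ne : (n - k : ℝ) ≠ 0 := h_sub ▸ Nat.cast_ne_zero.mpr hnk
  have h_choose : log (n.choose k) = log n ! - log k ! - log (n - k)! := by
    rw [Nat.cast_choose ℝ hkn.le, log_div (by positivity) (by positivity),
      log_mul (by positivity) (by positivity), sub_sub]
  have h_correction : log (n * (k / n) * (1 - k / n)) = log k + log (n - k : ℝ) - log n := by
    rw [mul_div_cancel₀ _ (by positivity), one_sub_div (by positivity), log_mul (by positivity)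
      (by positivity), log_div h_sub_ne (by positivity), add_sub_assoc]
  have h_upper := log_factorial_le_stirling hn
  have h_lower_k := Stirling.le_log_factorial_stirling hk
  have h_lower_sub := Stirling.le_log_factorial_stirling hnk
  rw [h_sub] at h_lower_sub
  rw [h_choose, h_correction, mul_binEntropy_div (by positivity)]
  linarith

/-- The relative entropy (Kullback–Leibler divergence) of the Bernoulli law with parameter `w` with
respect to the one with parameter `p`: the large deviation rate of `binProb p n k` at
`w = k / n`. -/
noncomputable def bernoulliRelEntropy (w p : ℝ) : ℝ :=
  w * log (w / p) + (1 - w) * log ((1 - w) / (1 - p))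

lemma bernoulliRelEntropy_eq_neg_binEntropy_sub {w p : ℝ} (hp₀ : p ≠ 0) (hp₁ : p ≠ 1) :
    bernoulliRelEntropy w p = -binEntropy w - (w * log p + (1 - w) * log (1 - p)) := by
  have h_split {x y : ℝ} (hy : y ≠ 0) : x * log (x / y) = -negMulLog x - x * log y := by
    rcases eq_or_ne x 0 with rfl | hx
    · simp
    · rw [log_div hx hy, negMulLog]
      ring
  rw [bernoulliRelEntropy, h_split hp₀, h_split (sub_ne_zero.mpr hp₁.symm),
    binEntropy_eq_negMulLog_add_negMulLog_one_sub]
  ring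

lemma binProb_pos {p : ℝ} (hp₀ : 0 < p) (hp₁ : p < 1) {n k : ℕ} (hkn : k ≤ n) :
    0 < binProb p n k :=
  mul_pos (mul_pos (mod_cast Nat.choose_pos hkn) (pow_pos hp₀ k)) (pow_pos (sub_pos.mpr hp₁) _)

lemma log_binProb_le {p : ℝ} (hp₀ : p ≠ 0) (hp₁ : p ≠ 1) {n k : ℕ} (hk : k ≠ 0) (hkn : k < n) :
    log (binProb p n k) ≤ -(n * bernoulliRelEntropy (k / n) p)
      - log (n * (k / n) * (1 - k / n)) / 2 + (1 - log (2 * π)) := by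
  have hn : (n : ℝ) ≠ 0 := by norm_cast; lia
  have hq : 1 - p ≠ 0 := sub_ne_zero.mpr hp₁.symm
  have h_choose : (n.choose k : ℝ) ≠ 0 := mod_cast (Nat.choose_pos hkn.le).ne'
  have h_log : log (binProb p n k) = log (n.choose k)
      + n * (k / n * log p + (1 - k / n) * log (1 - p)) := by
    rw [binProb, log_mul (mul_ne_zero h_choose (pow_ne_zero _ hp₀)) (pow_ne_zero _ hq),
      log_mul h_choose (pow_ne_zero _ hp₀), log_pow, log_pow, Nat.cast_sub hkn.le]
    field_simp
    ring
  rw [h_log, bernoulliRelEntropy_eq_neg_binEntropy_sub hp₀ hp₁]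
  linarith [log_choose_le_mul_binEntropy hk hkn]

lemma normalPdf_pos (x : ℝ) : 0 < normalPdf x := by
  unfold normalPdf
  positivity

lemma log_normalPdf (x : ℝ) : log (normalPdf x) = -(x ^ 2 / 2) - log (2 * π) / 2 := by
  rw [normalPdf, log_div (exp_ne_zero _) (by positivity), log_exp, log_sqrt (by positivity),
    neg_div]

lemma zpt_add_sq_div_two {p : ℝ} (hp₀ : 0 < p) (hp₁ : p < 1) {n : ℕ} (hn : n ≠ 0) (k j : ℤ) :
    zpt p n (k + j) ^ 2 / 2 = n * ((k / n - p) ^ 2 / (2 * (p * (1 - p))))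
      + j * (k / n - p) / (p * (1 - p)) + j ^ 2 / (2 * (n * (p * (1 - p)))) := by
  have hq : 0 < 1 - p := sub_pos.mpr hp₁
  rw [zpt, div_pow, sq_sqrt (by positivity)]
  push_cast
  field_simp
  ring

theorem log_binProb_div_normalPdf_le {p : ℝ} (hp₀ : 0 < p) (hp₁ : p < 1) {n k : ℕ} (hk : k ≠ 0)
    (hkn : k < n) (j : ℤ) :
    log (√(n * (p * (1 - p))) * binProb p n k / normalPdf (zpt p n (k + j))) ≤
      n * ((k / n - p) ^ 2 / (2 * (p * (1 - p))) - bernoulliRelEntropy (k / n) p)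
        - log (k / n * (1 - k / n) / (p * (1 - p))) / 2
        + j * (k / n - p) / (p * (1 - p)) + j ^ 2 / (2 * (n * (p * (1 - p))))
        + (1 - log (2 * π) / 2) := by
  have hn : n ≠ 0 := by lia
  have hn_pos : (0 : ℝ) < n := by positivity
  have hv : 0 < p * (1 - p) := mul_pos hp₀ (sub_pos.mpr hp₁)
  have hw : 0 < (k : ℝ) / n * (1 - k / n) :=
    mul_pos (by positivity) (sub_pos.mpr ((div_lt_one hn_pos).mpr (mod_cast hkn)))
  have h_bin_pos := binProb_pos hp₀ hp₁ hkn.le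
  have h_pdf_pos := normalPdf_pos (zpt p n (k + j))
  have h_bin := log_binProb_le hp₀.ne' hp₁.ne hk hkn
  have h_sq := zpt_add_sq_div_two hp₀ hp₁ hn k j
  rw [mul_assoc, log_mul hn_pos.ne' hw.ne'] at h_bin
  rw [log_div (by positivity) h_pdf_pos.ne', log_mul (by positivity) h_bin_pos.ne',
    log_sqrt (by positivity), log_mul hn_pos.ne' hv.ne', log_normalPdf, h_sq,
    log_div hw.ne' hv.ne', Int.cast_natCast]
  linarith

lemma αSym_eq_sub_bernoulliRelEntropy (w : ℝ) :
    αSym w = (w - 1 / 2) ^ 2 / (2 * (1 / 2 * (1 - 1 / 2)))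
      - bernoulliRelEntropy w (1 / 2) := by
  rw [bernoulliRelEntropy_eq_neg_binEntropy_sub (by norm_num) (by norm_num),
    binEntropy_eq_negMulLog_add_negMulLog_one_sub, negMulLog, negMulLog, αSym,
    sub_half, one_div, log_inv]
  ring

lemma βSym_eq_sub_log {w : ℝ} (hw₀ : w ≠ 0) (hw₁ : w ≠ 1) (n : ℕ) :
    βSym n w = log 2 - log (w * (1 - w) / (1 / 2 * (1 - 1 / 2))) / 2
      + (w - 1 / 2) / (1 / 2 * (1 - 1 / 2)) + 25 / (12 * n) := by
  have hw : 1 - w ≠ 0 := sub_ne_zero.mpr hw₁.symm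
  have h_quarter : log (1 / 2 * (1 - 1 / 2)) = -(2 * log 2) := by
    rw [sub_half, ← sq, log_pow, one_div, log_inv]
    push_cast
    ring
  rw [log_div (mul_ne_zero hw₀ hw) (by norm_num), log_mul hw₀ hw, h_quarter, βSym]
  ring

lemma one_le_log_two_add_log_two_pi_div_two : 1 ≤ log 2 + log (2 * π) / 2 := by
  have h_pi : log 2 ≤ log π := log_le_log two_pos two_le_pi
  rw [log_mul two_ne_zero pi_ne_zero]
  linarith [log_two_gt_d9]

theorem log_ratio_bounded_by_rate_function_symmetric_general {n k : ℕ} (hk : 0 < k)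
    (hkn : k < n) :
    log (√n * binProb (1 / 2) n k / (2 * normalPdf (zpt (1 / 2) n (k + 1)))) ≤
      αSym ((k : ℝ) / n) * n + βSym n ((k : ℝ) / n) := by
  have hn : (0 : ℝ) < n := by norm_cast; lia
  have hw₁ : (k : ℝ) / n ≠ 1 := ((div_lt_one hn).mpr (mod_cast hkn)).ne
  have h_prefactor : √(n * (1 / 2 * (1 - 1 / 2))) = √n / 2 := by
    rw [sub_half, ← sq, sqrt_mul n.cast_nonneg, sqrt_sq one_half_pos.le, mul_one_div]
  have h_ratio : √n * binProb (1 / 2) n k / (2 * normalPdf (zpt (1 / 2) n (k + 1))) =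
      √n / 2 * binProb (1 / 2) n k / normalPdf (zpt (1 / 2) n (k + 1)) := by
    rw [← div_div, mul_div_right_comm]
  have h_bound := log_binProb_div_normalPdf_le one_half_pos one_half_lt_one hk.ne' hkn 1
  rw [h_prefactor, ← h_ratio, ← αSym_eq_sub_bernoulliRelEntropy, Int.cast_one, one_mul] at h_bound
  have h_order_inv : (1 : ℝ) ^ 2 / (2 * (n * (1 / 2 * (1 - 1 / 2)))) ≤ 25 / (12 * n) := by
    rw [div_le_div_iff₀ (by positivity) (by positivity)]
    linarith
  rw [βSym_eq_sub_log (by positivity) hw₁]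
  linarith [one_le_log_two_add_log_two_pi_div_two]

end

theorem log_ratio_bounded_by_rate_function_symmetric :
    ∀ n : ℕ, 1 ≤ n → ∀ k : ℕ, (n : ℝ) / 2 < k → k ≤ n - 1 →
      Real.log (Real.sqrt n * binProb (1 / 2) n k / (2 * normalPdf (zpt (1 / 2) n (k + 1)))) ≤
        αSym ((k : ℝ) / n) * n + βSym n ((k : ℝ) / n) := by
  intro n hn k hk hkn
  have hk_pos : (0 : ℝ) < k := lt_of_le_of_lt (by positivity) hk
  exact log_ratio_bounded_by_rate_function_symmetric_general (mod_cast hk_pos) (by lia)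
end

section
/- Let p ∈ (1/2, 1) and for n ≥ 1 define a_n = (√n/(z_{1,1} − z_{1,0})) · log( (p/(1−p)) · (exp(z_{1,1}/√n) − 1)/(1 − exp(z_{1,0}/√n)) ), where z_{1,0} = −√(p/(1−p)) and z_{1,1} = √((1−p)/p). Then a_n = 1/2 − ((2p − 1)/(24·√(p(1−p))))·n^{−1/2} + O(n^{−1}) as n → ∞; that is, there exist C > 0 and n₀ such that |a_n − 1/2 + ((2p − 1)/(24·√(p(1−p))))·n^{−1/2}| ≤ C/n for all n ≥ n₀. -/
/-!
With `x = z_{1,1} / √n`, `y = z_{1,0} / √n` and `K x = log ((eˣ - 1) / x)`, the identity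
`p / (1 - p) = -z_{1,0} / z_{1,1}` turns `a_n` into the divided difference `(K x - K y) / (x - y)`.
Since `K x = x / 2 + x² / 24 + O(x³)`, this is `1 / 2 + (x + y) / 24 + O(1 / n)`, and
`z_{1,0} + z_{1,1} = (1 - 2p) / √(p (1 - p))`.
-/

open MeasureTheory Filter

noncomputable def z10 (p : ℝ) : ℝ := -Real.sqrt (p / (1 - p))

noncomputable def z11 (p : ℝ) : ℝ := Real.sqrt ((1 - p) / p)

/-- The coefficient `a_n` of the martingale density of the `n`-step binomial model. -/
noncomputable def aCoef (p : ℝ) (n : ℕ) : ℝ :=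
  (Real.sqrt n / (z11 p - z10 p)) *
    Real.log ((p / (1 - p)) * (Real.exp (z11 p / Real.sqrt n) - 1) /
      (1 - Real.exp (z10 p / Real.sqrt n)))

/-- The coefficient `b_n` of the martingale density of the `n`-step binomial model. -/
noncomputable def bCoef (p : ℝ) (n : ℕ) : ℝ :=
  n * Real.log ((1 - p) * Real.exp (-(z10 p) * aCoef p n / Real.sqrt n) +
    p * Real.exp (-(z11 p) * aCoef p n / Real.sqrt n))

open Asymptotics Topology

theorem isBigO_div_self_of_isBigO_pow_succ {𝕜 : Type*} [NormedField 𝕜] {f : 𝕜 → 𝕜} {n : ℕ}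
    (hf : f =O[𝓝[≠] 0] (· ^ (n + 1))) : (fun x ↦ f x / x) =O[𝓝[≠] 0] (· ^ n) := by
  refine (hf.mul (isBigO_refl (·⁻¹) _)).congr' (.of_forall fun x ↦ (div_eq_mul_inv _ _).symm) ?_
  filter_upwards [self_mem_nhdsWithin] with x hx
  rw [pow_succ, mul_inv_cancel_right₀ hx]

theorem slope_sub_isBigO_sq {𝕜 : Type*} [NormedField 𝕜] {f : 𝕜 → 𝕜} {c₀ c₁ c₂ a b : 𝕜}
    (hf : (fun x ↦ f x - (c₀ + c₁ * x + c₂ * x ^ 2)) =O[𝓝[≠] 0] (· ^ 3))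
    (ha : a ≠ 0) (hb : b ≠ 0) (hab : a ≠ b) :
    (fun h ↦ slope f (a * h) (b * h) - (c₁ + c₂ * (a + b) * h)) =O[𝓝[≠] 0] (· ^ 2) := by
  have remainder_comp {c : 𝕜} (hc : c ≠ 0) :
      (fun h ↦ f (c * h) - (c₀ + c₁ * (c * h) + c₂ * (c * h) ^ 2)) =O[𝓝[≠] 0] (· ^ 3) := by
    have scale : Tendsto (c * ·) (𝓝[≠] 0) (𝓝[≠] 0) :=
      tendsto_nhdsWithin_of_tendsto_nhds_of_eventually_within _
        (((continuous_const_mul c).tendsto' 0 0 (mul_zero c)).mono_left nhdsWithin_le_nhds)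
        (eventually_mem_nhdsWithin.mono fun h hh ↦ mul_ne_zero hc hh)
    exact (hf.comp_tendsto scale).trans ((isBigO_const_mul_self c _ _).pow 3)
  have quotient := isBigO_div_self_of_isBigO_pow_succ
    (((remainder_comp hb).sub (remainder_comp ha)).const_mul_left (b - a)⁻¹)
  refine quotient.congr' ?_ .rfl
  filter_upwards [self_mem_nhdsWithin] with h hh
  have hh' : h ≠ 0 := hh
  have hba : b - a ≠ 0 := sub_ne_zero.2 hab.symm
  rw [slope_def_field, ← sub_mul]
  field_simp
  ring

theorem log_one_sub_add_sum_range_isBigO_pow (n : ℕ) :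
    (fun x : ℝ ↦ Real.log (1 - x) + ∑ i ∈ Finset.range n, x ^ (i + 1) / (i + 1))
      =O[𝓝 0] (· ^ (n + 1)) := by
  refine .of_bound 2 ?_
  filter_upwards [Metric.ball_mem_nhds (0 : ℝ) one_half_pos] with x hx
  have hx' : |x| < 1 / 2 := by simpa using hx
  calc ‖Real.log (1 - x) + ∑ i ∈ Finset.range n, x ^ (i + 1) / (i + 1)‖
      ≤ |x| ^ (n + 1) / (1 - |x|) := by
        rw [add_comm]
        exact Real.abs_log_sub_add_sum_range_le (by linarith) n
    _ ≤ |x| ^ (n + 1) / (1 / 2) := by gcongr; linarith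
    _ = 2 * ‖x ^ (n + 1)‖ := by rw [norm_pow, Real.norm_eq_abs]; ring

theorem exp_sub_one_div_sub_sum_range_isBigO_pow (n : ℕ) :
    (fun x : ℝ ↦ (Real.exp x - 1) / x - ∑ i ∈ Finset.range n, x ^ i / (i + 1).factorial)
      =O[𝓝[≠] 0] (· ^ n) := by
  have exp_taylor := (Real.exp_sub_sum_range_isBigO_pow (n + 1)).mono
    (nhdsWithin_le_nhds (s := {0}ᶜ))
  refine (isBigO_div_self_of_isBigO_pow_succ exp_taylor).congr' ?_ .rfl
  filter_upwards [self_mem_nhdsWithin] with x hx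
  have hx' : x ≠ 0 := hx
  have shift : ∑ i ∈ Finset.range (n + 1), x ^ i / i.factorial
      = x * (∑ i ∈ Finset.range n, x ^ i / (i + 1).factorial) + 1 := by
    rw [Finset.sum_range_succ', Finset.mul_sum]
    simp only [pow_succ', mul_div_assoc, pow_zero, Nat.factorial_zero, Nat.cast_one, div_one]
  rw [shift]
  field_simp
  ring

/-- The cumulant generating function `x ↦ log (∫ t in 0..1, exp (x * t))` of the uniform
distribution on `[0, 1]`, in closed form. At `x = 0` the conventions `0 / 0 = 0` and `log 0 = 0`
give the correct value `0`. -/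
noncomputable def uniformCGF (x : ℝ) : ℝ := Real.log ((Real.exp x - 1) / x)

theorem uniformCGF_sub_isBigO_cube :
    (fun x ↦ uniformCGF x - (x / 2 + x ^ 2 / 24)) =O[𝓝[≠] 0] (· ^ 3) := by
  let t : ℝ → ℝ := fun x ↦ 1 - (Real.exp x - 1) / x
  have t_taylor (n : ℕ) : (fun x ↦ t x + (∑ i ∈ Finset.range n, x ^ i / (i + 1).factorial - 1))
      =O[𝓝[≠] 0] (· ^ n) :=
    (exp_sub_one_div_sub_sum_range_isBigO_pow n).neg_left.congr_left fun x ↦ by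
      simp only [t]
      ring
  have t_order_one : t =O[𝓝[≠] 0] (fun x ↦ x) := by
    simpa using t_taylor 1
  have t_order_two : (fun x ↦ t x + x / 2) =O[𝓝[≠] 0] (· ^ 2) := by
    simpa [Finset.sum_range_succ] using t_taylor 2
  have t_order_three : (fun x ↦ t x + (x / 2 + x ^ 2 / 6)) =O[𝓝[≠] 0] (· ^ 3) := by
    refine (t_taylor 3).congr_left fun x ↦ ?_
    norm_num [Finset.sum_range_succ, Nat.factorial, add_assoc]
  have t_tendsto : Tendsto t (𝓝[≠] 0) (𝓝 0) :=
    t_order_one.trans_tendsto (tendsto_id.mono_left nhdsWithin_le_nhds)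
  have log_expansion : (fun x ↦ uniformCGF x + (t x + t x ^ 2 / 2)) =O[𝓝[≠] 0] (· ^ 3) := by
    have := ((log_one_sub_add_sum_range_isBigO_pow 2).comp_tendsto t_tendsto).trans
      (t_order_one.pow 3)
    simpa [Function.comp_def, t, uniformCGF, Finset.sum_range_succ, one_add_one_eq_two] using this
  have t_sq : (fun x ↦ (t x + x / 2) * (t x - x / 2)) =O[𝓝[≠] 0] (· ^ 3) := by
    have t_sub_order_one : (fun x ↦ t x - x / 2) =O[𝓝[≠] 0] (fun x ↦ x) :=
      t_order_one.sub ((isBigO_const_mul_self (1 / 2) _ _).congr_left fun x ↦ by ring)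
    exact (t_order_two.mul t_sub_order_one).congr_right fun x ↦ (pow_succ x 2).symm
  refine ((log_expansion.sub t_order_three).sub (t_sq.const_mul_left (1 / 2))).congr_left fun x ↦ ?_
  ring

theorem sqrt_div_eq_div_sqrt_mul {a : ℝ} (ha : 0 ≤ a) (b : ℝ) : √(a / b) = a / √(a * b) := by
  calc √(a / b) = √(a ^ 2 / (a * b)) := by
        congr 1
        rcases eq_or_ne a 0 with rfl | h
        · simp
        · rw [sq, mul_div_mul_left _ _ h]
    _ = a / √(a * b) := by rw [Real.sqrt_div (sq_nonneg a), Real.sqrt_sq ha]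

section StandardizedPoints

variable {p : ℝ}

theorem z10_eq (hp : 0 ≤ p) : z10 p = -p / √(p * (1 - p)) := by
  rw [z10, sqrt_div_eq_div_sqrt_mul hp, neg_div]

theorem z11_eq (hp : p ≤ 1) : z11 p = (1 - p) / √(p * (1 - p)) := by
  rw [z11, sqrt_div_eq_div_sqrt_mul (sub_nonneg.2 hp), mul_comm]

theorem z10_neg (hp : p ∈ Set.Ioo 0 1) : z10 p < 0 :=
  neg_lt_zero.2 (Real.sqrt_pos.2 (div_pos hp.1 (sub_pos.2 hp.2)))

theorem z11_pos (hp : p ∈ Set.Ioo 0 1) : 0 < z11 p :=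
  Real.sqrt_pos.2 (div_pos (sub_pos.2 hp.2) hp.1)

theorem z10_add_z11 (hp : p ∈ Set.Icc 0 1) : z10 p + z11 p = (1 - 2 * p) / √(p * (1 - p)) := by
  rw [z10_eq hp.1, z11_eq hp.2, ← add_div]
  ring

theorem neg_z10_div_z11 (hp : p ∈ Set.Ioo 0 1) : -z10 p / z11 p = p / (1 - p) := by
  have hs : √(p * (1 - p)) ≠ 0 := (Real.sqrt_pos.2 (mul_pos hp.1 (sub_pos.2 hp.2))).ne'
  rw [z10_eq hp.1.le, z11_eq hp.2.le, ← neg_div, neg_neg, div_div_div_cancel_right₀ hs]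

theorem aCoef_eq_slope_uniformCGF (hp : p ∈ Set.Ioo 0 1) {n : ℕ} (hn : n ≠ 0) :
    aCoef p n = slope uniformCGF (z10 p * (√n)⁻¹) (z11 p * (√n)⁻¹) := by
  have hm : 0 < √(n : ℝ) := Real.sqrt_pos.2 (by positivity)
  have h0 := (z10_neg hp).ne
  have h1 := (z11_pos hp).ne'
  have exp_sub_one_ne {z : ℝ} (hz : z ≠ 0) : Real.exp (z / √n) - 1 ≠ 0 :=
    sub_ne_zero.2 (Real.exp_eq_one_iff _ |>.not.2 (div_ne_zero hz hm.ne'))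
  have ratio : p / (1 - p) * (Real.exp (z11 p / √n) - 1) / (1 - Real.exp (z10 p / √n))
      = (Real.exp (z11 p / √n) - 1) / (z11 p / √n)
        / ((Real.exp (z10 p / √n) - 1) / (z10 p / √n)) := by
    have exp_z10_ne := exp_sub_one_ne h0
    rw [← neg_z10_div_z11 hp, ← neg_sub (Real.exp _) 1]
    field_simp
  rw [aCoef, ratio, Real.log_div (div_ne_zero (exp_sub_one_ne h1) (div_ne_zero h1 hm.ne'))
    (div_ne_zero (exp_sub_one_ne h0) (div_ne_zero h0 hm.ne')), slope_def_field, ← sub_mul]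
  simp only [uniformCGF, ← div_eq_mul_inv]
  field_simp

theorem aCoef_sub_isBigO (hp : p ∈ Set.Ioo 0 1) :
    (fun n : ℕ ↦ aCoef p n - (1 / 2 + 1 / 24 * (z10 p + z11 p) * (√n)⁻¹))
      =O[atTop] (fun n : ℕ ↦ ((√n)⁻¹) ^ 2) := by
  have inv_sqrt_tendsto : Tendsto (fun n : ℕ ↦ (√(n : ℝ))⁻¹) atTop (𝓝[≠] 0) :=
    (tendsto_inv_atTop_nhdsGT_zero.mono_right (nhdsGT_le_nhdsNE 0)).comp
      (Real.tendsto_sqrt_atTop.comp tendsto_natCast_atTop_atTop)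
  have slope_expansion := slope_sub_isBigO_sq (c₀ := 0) (c₁ := 1 / 2) (c₂ := 1 / 24)
    (uniformCGF_sub_isBigO_cube.congr_left fun x ↦ by ring)
    (z10_neg hp).ne (z11_pos hp).ne' ((z10_neg hp).trans (z11_pos hp)).ne
  refine (slope_expansion.comp_tendsto inv_sqrt_tendsto).congr' ?_ .rfl
  filter_upwards [eventually_ne_atTop 0] with n hn
  simp only [Function.comp_apply, aCoef_eq_slope_uniformCGF hp hn]

end StandardizedPoints

theorem aCoef_asymptotic_expansion_general (p : ℝ) (hp : p ∈ Set.Ioo (0 : ℝ) 1) :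
    ∃ C > (0 : ℝ), ∃ n₀ : ℕ, ∀ n : ℕ, n₀ ≤ n →
      |aCoef p n - 1 / 2 + (2 * p - 1) / (24 * Real.sqrt (p * (1 - p))) / Real.sqrt n| ≤
        C / n := by
  obtain ⟨C, hC, hbound⟩ := (aCoef_sub_isBigO hp).exists_pos
  obtain ⟨n₀, hn₀⟩ := eventually_atTop.1 hbound.bound
  refine ⟨C, hC, n₀, fun n hn ↦ ?_⟩
  have target_eq : aCoef p n - (1 / 2 + 1 / 24 * (z10 p + z11 p) * (√n)⁻¹)
      = aCoef p n - 1 / 2 + (2 * p - 1) / (24 * √(p * (1 - p))) / √n := by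
    rw [z10_add_z11 (Set.Ioo_subset_Icc_self hp)]
    ring
  have inv_sq : ‖((√(n : ℝ))⁻¹) ^ 2‖ = 1 / n := by
    rw [inv_pow, Real.sq_sqrt n.cast_nonneg, Real.norm_of_nonneg (by positivity), one_div]
  rw [← target_eq, ← mul_one_div C, ← inv_sq]
  exact hn₀ n hn

theorem aCoef_asymptotic_expansion (p : ℝ) (hp : p ∈ Set.Ioo (1 / 2 : ℝ) 1) :
    ∃ C > (0 : ℝ), ∃ n₀ : ℕ, ∀ n : ℕ, n₀ ≤ n →
      |aCoef p n - 1 / 2 + (2 * p - 1) / (24 * Real.sqrt (p * (1 - p))) / Real.sqrt n| ≤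
        C / n := by
  exact aCoef_asymptotic_expansion_general p (Set.Ioo_subset_Ioo_left one_half_pos.le hp)
end
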